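/- Let k be an algebraically closed field, n ≥ 1, m ≥ 1, λ ≥ 0, μ ≥ 0, δ, d integers. Give the polynomial ring S = k[u₀,…,uₙ,x,y,z] the ℕ×ℕ-valued weighting with weight (1,0) on each uᵢ, (0,1) on x, (λ,1) on y and (μ,m) on z, and let V(δ,d) ⊆ S be the k-subspace of polynomials that are weighted homogeneous of weight (δ,d). Assume d ≥ 3m, δ ≥ 3, δ ≥ 3λ and δ ≥ 3μ. Then for every a = (a₁,…,aₙ) ∈ kⁿ and every b, c ∈ k, the k-linear map V(δ,d) → k[u₁,…,uₙ,y,z]/(u₁,…,uₙ,y,z)⁴ sending f to the residue class of f(1, u₁+a₁, …, uₙ+aₙ, 1, y+b, z+c) is surjective. (This is the chart form of Lemma 3.8(2): the fourth restriction map r₄(p) of O_Q(δ,d) is surjective at every point p of Uₓ = (x ≠ 0).) -/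

import Mathlib

open MvPolynomial

/-!
In the chart `u₀ ≠ 0`, `x ≠ 0` both `u₀` and `x` become `1`, so a function that extends to a form of
bidegree `e` extends to forms of every larger bidegree. Up to the additive constant `aⱼ`, `b` or
`c`, each local coordinate is the image of a Cox variable, hence extends to a form of bidegree
`(max(1, λ, μ), m)`. Multiplying, every polynomial of degree at most `r` in the local coordinates
extends to a form of bidegree `r • (max(1, λ, μ), m) ≤ (δ, d)`, and these polynomials already
represent all jets of order `r`. The fourth restriction map is the case `r = 3`.
-/

section HomogeneousImage

variable {σ τ M R A : Type*} [AddCommMonoid M]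

section CommSemiring

variable [CommSemiring R] [CommSemiring A] [Algebra R A]

/-- The elements of `A` that lift along `Φ` to weighted homogeneous polynomials of weight `e`. When
`Φ` is the passage from Cox coordinates to an affine chart, these are the functions on the chart
that extend to sections of the line bundle of degree `e`. -/
noncomputable def homogeneousImage (Φ : MvPolynomial σ R →ₐ[R] A) (w : σ → M) (e : M) :
    Submodule R A :=
  (weightedHomogeneousSubmodule R w e).map Φ.toLinearMap

variable {Φ : MvPolynomial σ R →ₐ[R] A} {w : σ → M}

theorem map_mem_homogeneousImage {f : MvPolynomial σ R} {e : M}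
    (hf : IsWeightedHomogeneous w f e) : Φ f ∈ homogeneousImage Φ w e :=
  Submodule.mem_map_of_mem hf

instance homogeneousImage.gradedMonoid : SetLike.GradedMonoid (homogeneousImage Φ w) where
  one_mem := map_one Φ ▸ map_mem_homogeneousImage (isWeightedHomogeneous_one R w)
  mul_mem := by
    rintro _ _ _ _ ⟨f, hf, rfl⟩ ⟨g, hg, rfl⟩
    exact map_mul Φ f g ▸ map_mem_homogeneousImage (hf.mul hg)

theorem homogeneousImage_mono [PartialOrder M] [CanonicallyOrderedAdd M]
    (h_one : ∀ e, 1 ∈ homogeneousImage Φ w e) : Monotone (homogeneousImage Φ w) := by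
  intro e e' he p hp
  obtain ⟨c, rfl⟩ := exists_add_of_le he
  simpa using SetLike.mul_mem_graded hp (h_one c)

end CommSemiring

theorem monomial_mem_homogeneousImage [CommSemiring R]
    {Φ : MvPolynomial σ R →ₐ[R] MvPolynomial τ R} {w : σ → M} {e : τ → M}
    (hX : ∀ i, X i ∈ homogeneousImage Φ w (e i)) (s : τ →₀ ℕ) (r : R) :
    monomial s r ∈ homogeneousImage Φ w (Finsupp.weight e s) := by
  rw [monomial_eq, C_mul', Finsupp.weight_apply]
  exact Submodule.smul_mem _ r (SetLike.prod_pow_mem_graded _ e _ s fun i _ => hX i)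

theorem restrictTotalDegree_le_homogeneousImage [PartialOrder M] [CanonicallyOrderedAdd M]
    [CommSemiring R] {Φ : MvPolynomial σ R →ₐ[R] MvPolynomial τ R} {w : σ → M} {e : M}
    (h_one : ∀ e, 1 ∈ homogeneousImage Φ w e) (hX : ∀ i, X i ∈ homogeneousImage Φ w e) (r : ℕ) :
    restrictTotalDegree τ R r ≤ homogeneousImage Φ w (r • e) := by
  rw [restrictTotalDegree, restrictSupport_eq_span, Submodule.span_le]
  rintro _ ⟨s, hs, rfl⟩
  refine homogeneousImage_mono h_one ?_ (monomial_mem_homogeneousImage hX s 1)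
  rw [Finsupp.weight_apply, Finsupp.sum, ← Finset.sum_smul]
  exact nsmul_le_nsmul_left zero_le hs

theorem add_algebraMap_mem_homogeneousImage_iff [CommRing R] [CommRing A] [Algebra R A]
    {Φ : MvPolynomial σ R →ₐ[R] A} {w : σ → M} {e : M} (h_one : 1 ∈ homogeneousImage Φ w e)
    {p : A} {r : R} : p + algebraMap R A r ∈ homogeneousImage Φ w e ↔
      p ∈ homogeneousImage Φ w e := by
  refine Submodule.add_mem_iff_left _ ?_
  rw [Algebra.algebraMap_eq_smul_one]
  exact Submodule.smul_mem _ r h_one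

end HomogeneousImage

section Jets

variable {σ τ M R : Type*} [AddCommMonoid M]

theorem restrictTotalDegree_sup_pow_idealOfVars [CommSemiring R] (r : ℕ) :
    restrictTotalDegree τ R r ⊔ (idealOfVars τ R ^ (r + 1)).restrictScalars R = ⊤ := by
  refine eq_top_iff.2 fun p _ => ?_
  induction p using MvPolynomial.induction_on' with
  | add p q hp hq => exact Submodule.add_mem _ (hp trivial) (hq trivial)
  | monomial s c =>
    rcases le_or_gt s.degree r with hs | hs
    · exact Submodule.mem_sup_left ((monomial_mem_restrictSupport R).2 (.inl hs))
    · refine Submodule.mem_sup_right ((mem_pow_idealOfVars_iff _ _).2 fun x hx => ?_)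
      rwa [Finset.mem_singleton.1 (support_monomial_subset hx)]

/-- The `N`-th restriction map (jet map) of the line bundle of degree `D`: a form of weight `D` is
written in local coordinates through `Φ` and reduced modulo the `N`-th power of the ideal of
the origin. -/
noncomputable def restrictionMap [CommRing R] (Φ : MvPolynomial σ R →ₐ[R] MvPolynomial τ R)
    (w : σ → M) (D : M) (N : ℕ) :
    weightedHomogeneousSubmodule R w D →ₗ[R] MvPolynomial τ R ⧸ idealOfVars τ R ^ N :=
  ((Ideal.Quotient.mkₐ R (idealOfVars τ R ^ N)).comp Φ).toLinearMap.domRestrict _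

theorem restrictionMap_surjective_of_restrictTotalDegree_le [CommRing R]
    {Φ : MvPolynomial σ R →ₐ[R] MvPolynomial τ R} {w : σ → M} {D : M} {r : ℕ}
    (h : restrictTotalDegree τ R r ≤ homogeneousImage Φ w D) :
    Function.Surjective (restrictionMap Φ w D (r + 1)) := by
  intro t
  obtain ⟨p, rfl⟩ := Ideal.Quotient.mk_surjective t
  have hp : p ∈ restrictTotalDegree τ R r ⊔ (idealOfVars τ R ^ (r + 1)).restrictScalars R :=
    restrictTotalDegree_sup_pow_idealOfVars (R := R) (τ := τ) r ▸ Submodule.mem_top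
  obtain ⟨q, hq, g, hg, rfl⟩ := Submodule.mem_sup.1 hp
  obtain ⟨f, hf, rfl⟩ := h hq
  refine ⟨⟨f, hf⟩, Ideal.Quotient.eq.2 ?_⟩
  simpa using hg

end Jets

section Chart

/-- The bidegrees of the Cox coordinates `u₀, …, uₙ` (left summand) and `x, y, z` (right summand)
of the `P(1,1,m)`-bundle `Q` over `Pⁿ`. -/
def coxWeight (n m lam μ : ℕ) : Fin (n + 1) ⊕ Fin 3 → ℕ × ℕ :=
  Sum.elim (fun _ => (1, 0)) ![(0, 1), (lam, 1), (μ, m)]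

variable {k : Type*} [CommRing k] {n m lam μ : ℕ}

/-- The passage to the chart `u₀ ≠ 0`, `x ≠ 0`, with coordinates `u₁, …, uₙ` (left summand) and
`y, z` (right summand) centred at the point `(a, b, c)`. -/
noncomputable def chartHom (a : Fin n → k) (b c : k) :
    MvPolynomial (Fin (n + 1) ⊕ Fin 3) k →ₐ[k] MvPolynomial (Fin n ⊕ Fin 2) k :=
  aeval (Sum.elim
    (fun i : Fin (n + 1) => Fin.cases 1 (fun j : Fin n => X (Sum.inl j) + C (a j)) i)
    ![1, X (Sum.inr 0) + C b, X (Sum.inr 1) + C c])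

variable (a : Fin n → k) (b c : k)

theorem one_mem_homogeneousImage_chartHom (e : ℕ × ℕ) :
    1 ∈ homogeneousImage (chartHom a b c) (coxWeight n m lam μ) e := by
  have hu : 1 ∈ homogeneousImage (chartHom a b c) (coxWeight n m lam μ) (1, 0) := by
    simpa [chartHom, coxWeight] using map_mem_homogeneousImage (Φ := chartHom a b c)
      (isWeightedHomogeneous_X k (coxWeight n m lam μ) (Sum.inl 0))
  have hx : 1 ∈ homogeneousImage (chartHom a b c) (coxWeight n m lam μ) (0, 1) := by
    simpa [chartHom, coxWeight] using map_mem_homogeneousImage (Φ := chartHom a b c)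
      (isWeightedHomogeneous_X k (coxWeight n m lam μ) (Sum.inr 0))
  simpa using SetLike.mul_mem_graded (SetLike.pow_mem_graded e.1 hu) (SetLike.pow_mem_graded e.2 hx)

theorem X_mem_homogeneousImage_chartHom (hm : 1 ≤ m) (i : Fin n ⊕ Fin 2) :
    X i ∈ homogeneousImage (chartHom a b c) (coxWeight n m lam μ) (max 1 (max lam μ), m) := by
  obtain ⟨j, r, hj, hjw⟩ : ∃ j r, chartHom a b c (X j) = X i + C r ∧
      coxWeight n m lam μ j ≤ (max 1 (max lam μ), m) := by
    rcases i with i | i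
    · exact ⟨Sum.inl i.succ, a i, by simp [chartHom], by simp [coxWeight]⟩
    · fin_cases i
      · exact ⟨Sum.inr 1, b, by simp [chartHom], by simp [coxWeight, hm]⟩
      · exact ⟨Sum.inr 2, c, by simp [chartHom], by simp [coxWeight]⟩
  have h_one := one_mem_homogeneousImage_chartHom (m := m) (lam := lam) (μ := μ) a b c
  have h_lift : X i + C r ∈ homogeneousImage (chartHom a b c) (coxWeight n m lam μ) _ :=
    hj ▸ homogeneousImage_mono h_one hjw (map_mem_homogeneousImage (isWeightedHomogeneous_X k _ j))
  exact (add_algebraMap_mem_homogeneousImage_iff (h_one _)).1 h_lift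

theorem fourth_restriction_map_surjective_on_Ux_general (hm : 1 ≤ m) {r δ d : ℕ}
    (hd : r * m ≤ d) (hδ1 : r ≤ δ) (hδ2 : r * lam ≤ δ) (hδ3 : r * μ ≤ δ) :
    Function.Surjective
      (restrictionMap (chartHom a b c) (coxWeight n m lam μ) (δ, d) (r + 1)) := by
  have h_le : r • (max 1 (max lam μ), m) ≤ (δ, d) := by
    simp [← Nat.mul_max_mul_left, *]
  have h_one := one_mem_homogeneousImage_chartHom (m := m) (lam := lam) (μ := μ) a b c
  exact restrictionMap_surjective_of_restrictTotalDegree_le <|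
    (restrictTotalDegree_le_homogeneousImage h_one
      (X_mem_homogeneousImage_chartHom a b c hm) r).trans (homogeneousImage_mono h_one h_le)

end Chart

/-- Lemma 3.8(2), chart form: on the `P(1,1,m)`-bundle `Q` over `Pⁿ` with Cox
coordinates `u₀,…,uₙ,x,y,z` of bidegrees `(1,0),…,(1,0),(0,1),(λ,1),(μ,m)`, if
`d ≥ 3m`, `δ ≥ 3`, `δ ≥ 3λ` and `δ ≥ 3μ`, then the fourth restriction map
`r₄(p) : H⁰(Q, O_Q(δ,d)) → O_Q(δ,d) ⊗ (O_Q/m_p⁴)` is surjective at every point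
`p` of `Uₓ = (x ≠ 0)`, written in the chart `u₀ ≠ 0`, `x ≠ 0` with chart
coordinates `u₁,…,uₙ,y,z`. -/
theorem fourth_restriction_map_surjective_on_Ux
    {k : Type*} [Field k] [IsAlgClosed k]
    {n m lam μ : ℕ} (hn : 1 ≤ n) (hm : 1 ≤ m)
    (δ d : ℕ) (hd : 3 * m ≤ d) (hδ1 : 3 ≤ δ) (hδ2 : 3 * lam ≤ δ) (hδ3 : 3 * μ ≤ δ)
    -- the bigrading: `uᵢ ↦ (1,0)`, `x ↦ (0,1)`, `y ↦ (λ,1)`, `z ↦ (μ,m)`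
    (w : Fin (n + 1) ⊕ Fin 3 → ℕ × ℕ)
    (hw : w = Sum.elim (fun _ => (1, 0)) ![(0, 1), (lam, 1), (μ, m)])
    (a : Fin n → k) (b c : k) :
    ∀ t : MvPolynomial (Fin n ⊕ Fin 2) k,
      ∃ f : MvPolynomial (Fin (n + 1) ⊕ Fin 3) k,
        IsWeightedHomogeneous w f (δ, d) ∧
        Ideal.Quotient.mk
            ((Ideal.span (Set.range (X : Fin n ⊕ Fin 2 → MvPolynomial (Fin n ⊕ Fin 2) k))) ^ 4)
            (aeval
              (Sum.elim
                (fun i : Fin (n + 1) =>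
                  Fin.cases 1 (fun j : Fin n => X (Sum.inl j) + C (a j)) i)
                ![1, X (Sum.inr 0) + C b, X (Sum.inr 1) + C c]) f) =
          Ideal.Quotient.mk _ t := by
  intro t
  obtain ⟨⟨f, hf⟩, hft⟩ := fourth_restriction_map_surjective_on_Ux_general a b c hm hd hδ1 hδ2 hδ3
    (Ideal.Quotient.mk _ t)
  exact ⟨f, hw ▸ hf, hft⟩
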